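/- arXiv:2106.06864 — 3 statements merged into one kernel-verified Lean document; each statement's English description precedes it below -/
import Mathlib

section
/- Let n ≥ 3 and let v = (v_1,…,v_n) be a vector of nonnegative integers with v_1 ≥ 1, v_n ≥ 1 and v_1 + v_2 + ⋯ + v_n even. Then N_n(v) = N_n(v − e_n − e_{n−1}) + N_n(v − e_1) + Σ_{u ∈ ℕ^{n−2}, Σu odd} N_{n−2}(u) · N_n(v − r(ū) − e_n) + Σ_{u ∈ ℕ^{n−2}, u ≠ 0, Σu even} N_{n−2}(u) · N_n(v − r(ū) − e_1), where e_k is the k-th standard basis vector of ℤ^n, ū = (0, u_1, …, u_{n−2}, 0) ∈ ℤ^n, r(x) denotes the reverse of the vector x, and each sum has only finitely many nonzero terms (terms with a negative entry in the argument vanish by convention). -/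
/-- A word (list over `ℕ`) is down-up alternating if `w 1 > w 2 < w 3 > w 4 < ⋯`
(1-indexed). -/
def DownUpAlt (w : List ℕ) : Prop :=
  ∀ k : ℕ, k + 1 < w.length →
    if k % 2 = 0 then w.getD (k + 1) 0 < w.getD k 0 else w.getD k 0 < w.getD (k + 1) 0

/-- `NVec n v` is the number of down-up alternating words over `{1,…,n}` that are
empty or have first letter `≥ 2`, and in which letter `i` occurs exactly `v i`
times (it is `0` if some entry of `v` is negative). -/
noncomputable def NVec (n : ℕ) (v : Fin n → ℤ) : ℕ :=
  Nat.card {w : List ℕ // (∀ x ∈ w, 1 ≤ x ∧ x ≤ n) ∧ DownUpAlt w ∧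
    (w = [] ∨ 2 ≤ w.headI) ∧ ∀ i : Fin n, (w.count ((i : ℕ) + 1) : ℤ) = v i}

/-! A reflection path is an up-down word starting with an extra letter `1`. A word of even length
that meets an extreme letter `1` or `n` is cut just before its last extreme letter. What precedes
the cut is again a reflection word. The letters after the extreme one avoid `1` and `n`, so the
complement `x ↦ n - x`, together with a reversal when they are even in number, turns them into an
arbitrary down-up word over `{1, …, n - 2}`, and parity dictates the extreme letter: `1` for an even
number, `n` for an odd one. The only down-up word which is not a reflection word is `[1]`; it
accounts for the term `N(v - e_n - e_{n-1})`, and the empty word for `N(v - e_1)`. The remaining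
words, grouped by their content `u`, give the two sums. -/

open Function

section ZigZag

variable {α β : Type*}

/-- `ZigZag r l` says that consecutive letters of `l` are related alternately by `r` and by its
converse, starting with `r`. -/
def ZigZag (r : α → α → Prop) : List α → Prop
  | [] => True
  | [_] => True
  | x :: y :: l => r x y ∧ ZigZag (swap r) (y :: l)

@[simp] lemma zigZag_nil (r : α → α → Prop) : ZigZag r [] := trivial

@[simp] lemma zigZag_singleton (r : α → α → Prop) (x : α) : ZigZag r [x] := trivial

@[simp] lemma zigZag_cons_cons (r : α → α → Prop) (x y : α) (l : List α) :
    ZigZag r (x :: y :: l) ↔ r x y ∧ ZigZag (swap r) (y :: l) := Iff.rfl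

lemma zigZag_cons_iff_of_forall {r : α → α → Prop} {x : α} {l : List α} (h : ∀ y ∈ l, r x y) :
    ZigZag r (x :: l) ↔ ZigZag (swap r) l := by
  cases l with
  | nil => simp
  | cons y l => simp [h y]

lemma zigZag_iff_getD (r : α → α → Prop) (l : List α) (d : α) :
    ZigZag r l ↔ ∀ k, k + 1 < l.length →
      if k % 2 = 0 then r (l.getD k d) (l.getD (k + 1) d)
      else r (l.getD (k + 1) d) (l.getD k d) := by
  induction l generalizing r with
  | nil => simp
  | cons x l ih =>
    cases l with
    | nil => simp
    | cons y l =>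
      have parity (k : ℕ) : (k + 1) % 2 = 0 ↔ ¬ k % 2 = 0 := by omega
      rw [zigZag_cons_cons, ih]
      conv_rhs => rw [← Nat.and_forall_add_one]
      simp only [parity, ite_not, List.getD_cons_succ, List.length_cons, Nat.add_lt_add_iff_right]
      simp [swap]

lemma zigZag_append_pair (r : α → α → Prop) (l : List α) (x y : α) :
    ZigZag r (l ++ [x, y]) ↔ ZigZag r (l ++ [x]) ∧ (swap^[l.length] r) x y := by
  induction l generalizing r with
  | nil => simp
  | cons a l ih =>
    cases l with
    | nil => simp
    | cons b l =>
      have := ih (swap r)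
      simp_all [and_assoc]

lemma zigZag_reverse (r : α → α → Prop) (l : List α) :
    ZigZag r l.reverse ↔ ZigZag (swap^[l.length + 1] r) l := by
  induction l with
  | nil => simp
  | cons x l ih =>
    cases l with
    | nil => simp
    | cons y l =>
      simp only [List.reverse_cons, List.append_assoc, List.cons_append, List.nil_append] at ih ⊢
      rw [zigZag_append_pair, ih, zigZag_cons_cons, and_comm]
      simp [iterate_succ_apply', swap]

lemma zigZag_map_iff {r : β → β → Prop} {s : α → α → Prop} {f : α → β} {l : List α}
    (h : ∀ x ∈ l, ∀ y ∈ l, r (f x) (f y) ↔ s x y) : ZigZag r (l.map f) ↔ ZigZag s l := by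
  induction l generalizing r s with
  | nil => simp
  | cons x l ih =>
    cases l with
    | nil => simp
    | cons y l =>
      have := @ih (swap r) (swap s) fun a ha b hb => h b (by simp [hb]) a (by simp [ha])
      simp_all

lemma zigZag_lt_append_cons_min [Preorder α] {m : α} {c : List α} (hc : ∀ x ∈ c, m < x) :
    ∀ q : List α, (∀ x ∈ q, m ≤ x) →
      (ZigZag (· < ·) (q ++ m :: c) ↔
        Even q.length ∧ ZigZag (· < ·) q ∧ ZigZag (· > ·) c)
  | [], _ => by simpa using zigZag_cons_iff_of_forall hc
  | [x], hq => by
    have := hq x (by simp)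
    simp [this.not_gt]
  | [x, y], hq => by
    have := hq x (by simp)
    simpa [swap, zigZag_cons_iff_of_forall hc] using fun h _ => this.trans_lt h
  | x :: y :: z :: q, hq => by
    have := zigZag_lt_append_cons_min hc (z :: q) fun a ha => hq a (by simp_all)
    simp only [List.cons_append, List.length_cons, Nat.even_add_one, zigZag_cons_cons,
      swap] at this ⊢
    tauto

lemma zigZag_gt_append_cons_max [Preorder α] {m : α} {q c : List α} (hq : ∀ x ∈ q, x ≤ m)
    (hc : ∀ x ∈ c, x < m) :
    ZigZag (· > ·) (q ++ m :: c) ↔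
      Even q.length ∧ ZigZag (· > ·) q ∧ ZigZag (· < ·) c :=
  zigZag_lt_append_cons_min (α := αᵒᵈ) hc q hq

end ZigZag

section Splitting

variable {α : Type*} {P : α → Prop}

lemma exists_eq_append_cons_of_exists_mem {l : List α} (h : ∃ x ∈ l, P x) :
    ∃ q z c, l = q ++ z :: c ∧ P z ∧ ∀ x ∈ c, ¬ P x := by
  induction l using List.reverseRecOn with
  | nil => simp at h
  | append_singleton l a ih =>
    by_cases ha : P a
    · exact ⟨l, a, [], rfl, ha, by simp⟩
    · obtain ⟨q, z, c, rfl, hz, hc⟩ := ih (by simpa [ha, or_and_right, exists_or] using h)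
      refine ⟨q, z, c ++ [a], by simp, hz, fun x hx => ?_⟩
      rcases List.mem_append.1 hx with hx | hx
      · exact hc x hx
      · rwa [List.mem_singleton.1 hx]

lemma append_cons_inj_of_forall_not {q q' c c' : List α} {z z' : α} (hz : P z) (hz' : P z')
    (hc : ∀ x ∈ c, ¬ P x) (hc' : ∀ x ∈ c', ¬ P x) (h : q ++ z :: c = q' ++ z' :: c') :
    q = q' ∧ z :: c = z' :: c' := by
  obtain ⟨a, rfl, ha⟩ | ⟨a, rfl, ha⟩ := List.append_eq_append_iff.1 h <;> cases a <;> grind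

end Splitting

/-- The words over the alphabet `{1, …, n}`. -/
def wordsOver (n : ℕ) : Set (List ℕ) := {w | ∀ x ∈ w, 1 ≤ x ∧ x ≤ n}

/-- The down-up alternating words over `{1, …, n}`, without restriction on the first letter. -/
def alternatingWords (n : ℕ) : Set (List ℕ) := {w ∈ wordsOver n | ZigZag (· > ·) w}

/-- The words over `{1, …, n}` encoding reflection paths. The condition on the first letter is
absorbed by making the starting plate `1` an extra letter in front. -/
def reflectionWords (n : ℕ) : Set (List ℕ) := {w ∈ wordsOver n | ZigZag (· < ·) (1 :: w)}

/-- The multiplicities in `w` of the letters `1, …, n`; the letter `i + 1` has index `i`. -/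
def content (n : ℕ) (w : List ℕ) : Fin n → ℕ := fun i => w.count ((i : ℕ) + 1)

lemma downUpAlt_iff_zigZag (w : List ℕ) : DownUpAlt w ↔ ZigZag (· > ·) w :=
  (zigZag_iff_getD (· > ·) w 0).symm

lemma zigZag_lt_one_cons_iff (w : List ℕ) :
    ZigZag (· < ·) (1 :: w) ↔ ZigZag (· > ·) w ∧ (w = [] ∨ 2 ≤ w.headI) := by
  cases w with
  | nil => simp
  | cons x w => simp [Nat.succ_le_iff, and_comm]

lemma reflectionWords_subset_alternatingWords (n : ℕ) :
    reflectionWords n ⊆ alternatingWords n :=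
  fun w hw => ⟨hw.1, ((zigZag_lt_one_cons_iff w).1 hw.2).1⟩

lemma nil_mem_reflectionWords (n : ℕ) : [] ∈ reflectionWords n := ⟨by simp [wordsOver], by simp⟩

lemma mem_alternatingWords_iff {n : ℕ} (hn : 1 ≤ n) {w : List ℕ} :
    w ∈ alternatingWords n ↔ w = [1] ∨ w ∈ reflectionWords n := by
  simp only [alternatingWords, reflectionWords, wordsOver, Set.mem_ofPred_eq,
    zigZag_lt_one_cons_iff]
  match w with
  | [] => simp
  | [x] =>
    have : 1 ≤ x ↔ x = 1 ∨ 2 ≤ x := by omega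
    simp only [List.forall_mem_singleton, zigZag_singleton, List.headI_cons]
    grind
  | x :: y :: w =>
    have (h : 1 ≤ y) (hyx : y < x) : 2 ≤ x := by omega
    simp only [List.forall_mem_cons, zigZag_cons_cons, List.headI_cons]
    grind

lemma NVec_eq_ncard (n : ℕ) (v : Fin n → ℤ) :
    NVec n v = {w ∈ reflectionWords n | ∀ i, (content n w i : ℤ) = v i}.ncard := by
  refine Nat.card_congr (Equiv.subtypeEquivRight fun w => ?_)
  simp [reflectionWords, wordsOver, content, zigZag_lt_one_cons_iff, downUpAlt_iff_zigZag,
    and_assoc]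

lemma NVec_natCast {n : ℕ} (u : Fin n → ℕ) :
    NVec n (fun i => (u i : ℤ)) = {w ∈ reflectionWords n | content n w = u}.ncard := by
  rw [NVec_eq_ncard]
  simp only [Nat.cast_inj, funext_iff]

section Content

variable {n : ℕ}

lemma content_append (w t : List ℕ) : content n (w ++ t) = content n w + content n t := by
  ext i
  simp [content]

lemma content_cons (k : Fin n) (w : List ℕ) :
    content n (((k : ℕ) + 1) :: w) = content n w + Pi.single k 1 := by
  ext i
  simp [content, List.count_cons, Pi.single_apply, Fin.ext_iff, eq_comm (a := (k : ℕ))]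

lemma sum_content {w : List ℕ} (hw : w ∈ wordsOver n) : ∑ i, content n w i = w.length := by
  induction w with
  | nil => simp [content]
  | cons x w ih =>
    obtain ⟨hx, hw'⟩ := List.forall_mem_cons.1 hw
    obtain ⟨k, rfl⟩ : ∃ k : Fin n, x = k + 1 := ⟨⟨x - 1, by omega⟩, by simp; omega⟩
    simp [content_cons, Finset.sum_add_distrib, ih hw']

lemma perm_of_content_eq {w w' : List ℕ} (hw : w ∈ wordsOver n) (hw' : w' ∈ wordsOver n)
    (h : content n w = content n w') : w.Perm w' := by
  refine List.perm_iff_count.2 fun a => ?_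
  by_cases ha : 1 ≤ a ∧ a ≤ n
  · simpa [content, Nat.sub_add_cancel ha.1] using congrFun h ⟨a - 1, by omega⟩
  · rw [List.count_eq_zero_of_not_mem fun h => ha (hw a h),
      List.count_eq_zero_of_not_mem fun h => ha (hw' a h)]

lemma finite_setOf_content_eq (v : Fin n → ℕ) : {w ∈ wordsOver n | content n w = v}.Finite := by
  obtain h | ⟨w₀, hw₀, rfl⟩ := {w ∈ wordsOver n | content n w = v}.eq_empty_or_nonempty
  · simp [h]
  · exact (List.finite_toSet w₀.permutations).subset fun w hw =>
      List.mem_permutations.2 (perm_of_content_eq hw.1 hw₀ hw.2)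

lemma content_eq_zero_iff {w : List ℕ} (hw : w ∈ wordsOver n) : content n w = 0 ↔ w = [] := by
  rw [← List.length_eq_zero_iff, ← sum_content hw]
  simp [funext_iff]

/-- The reflection words over `{1, …, n}` with content in `s`. -/
def reflectionWordsWithContent (n : ℕ) (s : Set (Fin n → ℕ)) : Set (List ℕ) :=
  {w ∈ reflectionWords n | content n w ∈ s}

lemma alternatingWords_eq_union (hn : 1 ≤ n) :
    alternatingWords n = {[1]} ∪ {[]} ∪ reflectionWordsWithContent n {u | Odd (∑ i, u i)} ∪
      reflectionWordsWithContent n {u | u ≠ 0 ∧ Even (∑ i, u i)} := by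
  ext w
  simp only [mem_alternatingWords_iff hn, reflectionWordsWithContent, Set.mem_union,
    Set.mem_singleton_iff, Set.mem_ofPred_eq]
  have zero_iff (hw : w ∈ reflectionWords n) := content_eq_zero_iff hw.1
  have nil_mem := nil_mem_reflectionWords n
  grind

end Content

section FinalSegment

variable {n : ℕ}

/-- The part, from the last visit to an extreme letter `1` or `n` on, of a word of even length; it
is encoded by a word `p` over `{1, …, n - 2}` through the complement `x ↦ n - x`. The extreme letter
is `1` or `n` according to the parity of `p`, and the reversal for even `p` turns an up-down word
into a down-up one. -/
def finalSegment (n : ℕ) (p : List ℕ) : List ℕ :=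
  if Even p.length then 1 :: (p.map (n - ·)).reverse else n :: p.map (n - ·)

lemma length_finalSegment (p : List ℕ) : (finalSegment n p).length = p.length + 1 := by
  unfold finalSegment
  split_ifs <;> simp

lemma exists_finalSegment_eq_cons {p : List ℕ} (hn : 2 ≤ n) (hp : p ∈ wordsOver (n - 2)) :
    ∃ z c, finalSegment n p = z :: c ∧ (z = 1 ∨ z = n) ∧ ∀ x ∈ c, 1 < x ∧ x < n := by
  have inner : ∀ y ∈ p, 1 < n - y ∧ n - y < n := fun y hy => by have := hp y hy; omega
  unfold finalSegment
  split_ifs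
  · exact ⟨1, _, rfl, .inl rfl, by simpa using inner⟩
  · exact ⟨n, _, rfl, .inr rfl, by simpa using inner⟩

lemma finalSegment_mem_wordsOver {p : List ℕ} (hn : 2 ≤ n) (hp : p ∈ wordsOver (n - 2)) :
    finalSegment n p ∈ wordsOver n := by
  obtain ⟨z, c, h, hz, hc⟩ := exists_finalSegment_eq_cons hn hp
  rw [h]
  refine List.forall_mem_cons.2 ⟨by omega, fun x hx => ?_⟩
  have := hc x hx
  omega

lemma map_sub_map_sub {l : List ℕ} (hl : ∀ x ∈ l, x ≤ n) : (l.map (n - ·)).map (n - ·) = l := by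
  rw [List.map_map]
  refine (List.map_congr_left fun x hx => ?_).trans (List.map_id l)
  exact Nat.sub_sub_self (hl x hx)

lemma finalSegment_injOn : Set.InjOn (finalSegment n) (wordsOver (n - 2)) := by
  intro p hp p' hp' h
  have hle {l : List ℕ} (hl : l ∈ wordsOver (n - 2)) : ∀ x ∈ l, x ≤ n := fun x hx =>
    (hl x hx).2.trans (n.sub_le 2)
  have hlen : p.length = p'.length := by simpa [length_finalSegment] using congrArg List.length h
  have hmap : p.map (n - ·) = p'.map (n - ·) := by
    unfold finalSegment at h
    rw [hlen] at h
    split_ifs at h <;> simpa using h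
  rw [← map_sub_map_sub (hle hp), hmap, map_sub_map_sub (hle hp')]

lemma exists_finalSegment_eq {z : ℕ} {c : List ℕ} (hc : ∀ x ∈ c, 1 < x ∧ x < n)
    (hz : if Even c.length then z = 1 else z = n) :
    ∃ p ∈ wordsOver (n - 2), finalSegment n p = z :: c := by
  have inner : ∀ y ∈ c, 1 ≤ n - y ∧ n - y ≤ n - 2 := fun y hy => by have := hc y hy; omega
  have hle : ∀ y ∈ c, y ≤ n := fun y hy => (hc y hy).2.le
  split_ifs at hz with h
  · refine ⟨(c.map (n - ·)).reverse, by simpa [wordsOver] using inner, ?_⟩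
    simp [finalSegment, h, hz, map_sub_map_sub hle]
  · refine ⟨c.map (n - ·), by simpa [wordsOver] using inner, ?_⟩
    simp [finalSegment, h, hz, map_sub_map_sub hle]

lemma zigZag_map_sub_iff {p : List ℕ} (hp : ∀ x ∈ p, x ≤ n) :
    ZigZag (· < ·) (p.map (n - ·)) ↔ ZigZag (· > ·) p :=
  zigZag_map_iff fun x hx y hy => by have := hp x hx; have := hp y hy; omega

lemma zigZag_append_max_iff {q c : List ℕ} (hn : 1 < n) (hq : ∀ x ∈ q, x ≤ n)
    (hc : ∀ x ∈ c, x < n) :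
    ZigZag (· < ·) (1 :: (q ++ n :: c)) ↔
      Even q.length ∧ ZigZag (· < ·) (1 :: q) ∧ ZigZag (· < ·) c := by
  rw [zigZag_lt_one_cons_iff, zigZag_lt_one_cons_iff, zigZag_gt_append_cons_max hq hc]
  cases q with
  | nil => simp [Nat.succ_le_iff, hn]
  | cons x q =>
    simp only [List.cons_append, List.headI_cons, reduceCtorEq]
    tauto

lemma zigZag_append_min_iff {q c : List ℕ} (hq : ∀ x ∈ q, 1 ≤ x) (hc : ∀ x ∈ c, 1 < x) :
    ZigZag (· < ·) (1 :: (q ++ 1 :: c)) ↔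
      Odd q.length ∧ ZigZag (· < ·) (1 :: q) ∧ ZigZag (· > ·) c := by
  rw [← List.cons_append, zigZag_lt_append_cons_min hc (1 :: q) (by simpa using hq)]
  simp [Nat.even_add_one]

/-- The parity of the length forces `q` to end just before a peak if `finalSegment n p` starts
with `n`, and just before a valley if it starts with `1`. -/
lemma zigZag_append_finalSegment_iff {q p : List ℕ} (hn : 2 ≤ n) (hq : q ∈ wordsOver n)
    (hp : p ∈ wordsOver (n - 2)) (hlen : Even (q ++ finalSegment n p).length) :
    ZigZag (· < ·) (1 :: (q ++ finalSegment n p)) ↔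
      ZigZag (· < ·) (1 :: q) ∧ ZigZag (· > ·) p := by
  have hle : ∀ x ∈ p, x ≤ n := fun x hx => by have := hp x hx; omega
  have inner : ∀ y ∈ p, 1 < n - y ∧ n - y < n := fun y hy => by have := hp y hy; omega
  rw [List.length_append, length_finalSegment] at hlen
  by_cases h : Even p.length
  · have hqo : Odd q.length := by grind
    have swap_iter : swap^[p.length + 1] (· > ·) = ((· < ·) : ℕ → ℕ → Prop) := by
      rw [iterate_succ_apply, Involutive.iterate_even (fun _ => rfl) h]
      rfl
    rw [finalSegment, if_pos h, zigZag_append_min_iff (fun x hx => (hq x hx).1)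
      (by simpa using fun y hy => (inner y hy).1), zigZag_reverse, List.length_map, swap_iter,
      zigZag_map_sub_iff hle]
    simp [hqo]
  · have hqe : Even q.length := by grind
    rw [finalSegment, if_neg h, zigZag_append_max_iff (by omega) (fun x hx => (hq x hx).2)
      (by simpa using fun y hy => (inner y hy).2), zigZag_map_sub_iff hle]
    simp [hqe]

lemma exists_eq_append_finalSegment {w : List ℕ} (hn : 2 ≤ n) (hw : w ∈ reflectionWords n)
    (hlen : Even w.length) (hext : 1 ∈ w ∨ n ∈ w) :
    ∃ q, ∃ p ∈ wordsOver (n - 2), w = q ++ finalSegment n p := by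
  obtain ⟨q, z, c, rfl, hz, hc⟩ := exists_eq_append_cons_of_exists_mem
    (P := fun x => x = 1 ∨ x = n) (l := w) (by grind)
  have letters : ∀ x ∈ q ++ z :: c, 1 ≤ x ∧ x ≤ n := hw.1
  have inner : ∀ x ∈ c, 1 < x ∧ x < n := fun x hx => by
    have := letters x (by simp [hx])
    have := hc x hx
    omega
  have hq : ∀ x ∈ q, 1 ≤ x ∧ x ≤ n := fun x hx => letters x (by simp [hx])
  suffices if Even c.length then z = 1 else z = n by
    obtain ⟨p, hp, h⟩ := exists_finalSegment_eq inner this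
    exact ⟨q, p, hp, by rw [h]⟩
  simp only [List.length_append, List.length_cons] at hlen
  obtain rfl | rfl := hz
  · have := ((zigZag_append_min_iff (fun x hx => (hq x hx).1) fun x hx => (inner x hx).1).1 hw.2).1
    rw [if_pos (by grind)]
  · have := ((zigZag_append_max_iff (by omega) (fun x hx => (hq x hx).2)
      fun x hx => (inner x hx).2).1 hw.2).1
    rw [if_neg (by grind)]

theorem bijOn_append_finalSegment (hn : 2 ≤ n) :
    Set.BijOn (fun pq : List ℕ × List ℕ => pq.2 ++ finalSegment n pq.1)
      {pq ∈ alternatingWords (n - 2) ×ˢ reflectionWords n |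
        Even (pq.2 ++ finalSegment n pq.1).length}
      {w ∈ reflectionWords n | Even w.length ∧ (1 ∈ w ∨ n ∈ w)} := by
  refine ⟨?_, ?_, ?_⟩
  · rintro ⟨p, q⟩ ⟨⟨hp, hq⟩, hlen⟩
    obtain ⟨z, c, h, hz, -⟩ := exists_finalSegment_eq_cons hn hp.1
    refine ⟨⟨List.forall_mem_append.2 ⟨hq.1, finalSegment_mem_wordsOver hn hp.1⟩,
      (zigZag_append_finalSegment_iff hn hq.1 hp.1 hlen).2 ⟨hq.2, hp.2⟩⟩, hlen, ?_⟩
    grind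
  · rintro ⟨p, q⟩ ⟨⟨hp, -⟩, -⟩ ⟨p', q'⟩ ⟨⟨hp', -⟩, -⟩ h
    obtain ⟨z, c, hzc, hz, hc⟩ := exists_finalSegment_eq_cons hn hp.1
    obtain ⟨z', c', hzc', hz', hc'⟩ := exists_finalSegment_eq_cons hn hp'.1
    obtain ⟨rfl, hpp⟩ := append_cons_inj_of_forall_not (P := fun x => x = 1 ∨ x = n) hz hz'
      (fun x hx => by have := hc x hx; omega) (fun x hx => by have := hc' x hx; omega)
      (by simpa only [hzc, hzc'] using h)
    rw [← hzc, ← hzc'] at hpp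
    exact Prod.ext (finalSegment_injOn hp.1 hp'.1 hpp) rfl
  · rintro w ⟨hw, hlen, hext⟩
    obtain ⟨q, p, hp, rfl⟩ := exists_eq_append_finalSegment hn hw hlen hext
    have hq : q ∈ wordsOver n := (List.forall_mem_append.1 hw.1).1
    obtain ⟨hzq, hzp⟩ := (zigZag_append_finalSegment_iff hn hq hp hlen).1 hw.2
    exact ⟨(p, q), ⟨⟨⟨hp, hzp⟩, hq, hzq⟩, hlen⟩, rfl⟩

end FinalSegment

section Counting

lemma finsum_mem_ncard_fiber {α β : Type*} {T : Set α} (hT : T.Finite) (f : α → β) (s : Set β) :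
    ∑ᶠ b ∈ s, {a ∈ T | f a = b}.ncard = {a ∈ T | f a ∈ s}.ncard := by
  classical
  have hs : {a ∈ T | f a ∈ s}.Finite := hT.subset fun a ha => ha.1
  have fiber : ∀ b ∈ s, {a ∈ T | f a = b} = ↑(hs.toFinset.filter (f · = b)) := fun b hb => by
    ext a
    simp only [Finset.coe_filter, Set.Finite.mem_toFinset, Set.mem_ofPred_eq]
    grind
  rw [Set.ncard_eq_toFinset_card _ hs, Finset.card_eq_sum_card_image f,
    finsum_mem_congr rfl fun b hb => by rw [fiber b hb, Set.ncard_coe_finset]]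
  refine finsum_mem_eq_sum_of_subset _ ?_ ?_
  · rintro b ⟨-, hb⟩
    obtain ⟨a, ha⟩ := Finset.card_ne_zero.1 hb
    exact Finset.mem_coe.2 (Finset.mem_image.2 ⟨a, Finset.mem_filter.1 ha⟩)
  · simp only [Finset.coe_image, Set.Finite.coe_toFinset, Set.image_subset_iff]
    exact fun a ha => ha.2

lemma ncard_sep_mem_union {α β : Type*} {T : Set α} (hT : T.Finite) (f : α → β) {s t : Set β}
    (h : Disjoint s t) :
    {a ∈ T | f a ∈ s ∪ t}.ncard = {a ∈ T | f a ∈ s}.ncard + {a ∈ T | f a ∈ t}.ncard := by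
  rw [← Set.ncard_union_eq _ (hT.subset fun _ ha => ha.1) (hT.subset fun _ ha => ha.1)]
  · congr 1
    ext a
    simp only [Set.mem_union, Set.mem_ofPred_eq, and_or_left]
  · exact Set.disjoint_left.2 fun a ha ha' => Set.disjoint_left.1 h ha.2 ha'.2

end Counting

section Factorizations

variable {n : ℕ} {v : Fin n → ℕ}

/-- The splittings `q ++ finalSegment n p`, recorded as `(p, q)`, of the reflection words with
content `v`. -/
def factorizations (n : ℕ) (v : Fin n → ℕ) : Set (List ℕ × List ℕ) :=
  {pq ∈ alternatingWords (n - 2) ×ˢ reflectionWords n |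
    content n (pq.2 ++ finalSegment n pq.1) = v}

lemma bijOn_factorizations (hn : 2 ≤ n) (heven : Even (∑ i, v i))
    (hv : 0 < v ⟨0, by omega⟩ ∨ 0 < v ⟨n - 1, by omega⟩) :
    Set.BijOn (fun pq : List ℕ × List ℕ => pq.2 ++ finalSegment n pq.1) (factorizations n v)
      {w ∈ reflectionWords n | content n w = v} := by
  have even_length {w : List ℕ} (hw : w ∈ wordsOver n) (hc : content n w = v) :
      Even w.length := by
    rwa [← sum_content hw, hc]
  have extreme_mem {w : List ℕ} (hc : content n w = v) : 1 ∈ w ∨ n ∈ w := by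
    subst hc
    simpa [content, Nat.sub_add_cancel (one_le_two.trans hn)] using hv
  convert (bijOn_append_finalSegment hn).subset_right
    (r := {w ∈ reflectionWords n | content n w = v})
    (fun w hw => ⟨hw.1, even_length hw.1.1 hw.2, extreme_mem hw.2⟩) using 1
  ext ⟨p, q⟩
  constructor
  · rintro ⟨⟨hp, hq⟩, hc⟩
    have hlen := even_length
      (List.forall_mem_append.2 ⟨hq.1, finalSegment_mem_wordsOver hn hp.1⟩) hc
    exact ⟨⟨⟨hp, hq⟩, hlen⟩, ((bijOn_append_finalSegment hn).mapsTo ⟨⟨hp, hq⟩, hlen⟩).1, hc⟩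
  · rintro ⟨⟨hpq, -⟩, -, hc⟩
    exact ⟨hpq, hc⟩

lemma finite_factorizations (hn : 2 ≤ n) (heven : Even (∑ i, v i))
    (hv : 0 < v ⟨0, by omega⟩ ∨ 0 < v ⟨n - 1, by omega⟩) : (factorizations n v).Finite :=
  (bijOn_factorizations hn heven hv).finite_iff_finite.2
    ((finite_setOf_content_eq v).subset fun _ hw => ⟨hw.1.1, hw.2⟩)

lemma NVec_eq_ncard_factorizations (hn : 2 ≤ n) (heven : Even (∑ i, v i))
    (hv : 0 < v ⟨0, by omega⟩ ∨ 0 < v ⟨n - 1, by omega⟩) :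
    NVec n (fun i => (v i : ℤ)) = (factorizations n v).ncard := by
  rw [NVec_natCast, (bijOn_factorizations hn heven hv).ncard_eq]

lemma ncard_factorizations_fst_mem {P : Set (List ℕ)} (hP : P ⊆ alternatingWords (n - 2))
    {v' : Fin n → ℤ} (h : ∀ p ∈ P, ∀ i, (v i : ℤ) = v' i + content n (finalSegment n p) i) :
    {pq ∈ factorizations n v | pq.1 ∈ P}.ncard = P.ncard * NVec n v' := by
  rw [NVec_eq_ncard, ← Set.ncard_prod]
  congr 1
  ext ⟨p, q⟩
  simp only [factorizations, content_append, funext_iff, Pi.add_apply, Set.mem_ofPred_eq,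
    Set.mem_prod]
  refine ⟨fun ⟨⟨⟨_, hq⟩, hc⟩, hp⟩ => ⟨hp, hq, fun i => ?_⟩,
    fun ⟨hp, hq, hc⟩ => ⟨⟨⟨hP hp, hq⟩, fun i => ?_⟩, hp⟩⟩
  all_goals
    have := h p hp i
    have := hc i
    omega

/-- The vector `r(ū)`: `u` padded by a zero at each end and then reversed. -/
def paddedReverse (n : ℕ) (u : Fin (n - 2) → ℕ) : Fin n → ℤ := fun i =>
  if h : 1 ≤ n - 1 - (i : ℕ) ∧ n - 1 - (i : ℕ) ≤ n - 2 then
    (u ⟨n - 1 - (i : ℕ) - 1, by omega⟩ : ℤ) else 0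

lemma count_map_sub {p : List ℕ} (hp : ∀ x ∈ p, x ≤ n) {a : ℕ} (ha : a ≤ n) :
    (p.map (n - ·)).count a = p.count (n - a) := by
  simp only [List.count, List.countP_map]
  refine List.countP_congr fun x hx => ?_
  have := hp x hx
  simp only [Function.comp_apply, beq_iff_eq]
  omega

lemma content_map_sub {p : List ℕ} (hp : p ∈ wordsOver (n - 2)) (i : Fin n) :
    (content n (p.map (n - ·)) i : ℤ) = paddedReverse n (content (n - 2) p) i := by
  have hle : ∀ x ∈ p, x ≤ n := fun x hx => (hp x hx).2.trans (n.sub_le 2)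
  rw [content, count_map_sub hle i.2, paddedReverse]
  split_ifs with h
  · rw [content]
    congr 2
    dsimp only
    omega
  · rw [List.count_eq_zero_of_not_mem fun hm => ?_, Nat.cast_zero]
    have := hp _ hm
    omega

lemma content_finalSegment {p : List ℕ} {k : Fin n} (hp : p ∈ wordsOver (n - 2))
    (hk : if Even p.length then (k : ℕ) = 0 else (k : ℕ) = n - 1) (i : Fin n) :
    (content n (finalSegment n p) i : ℤ) =
      paddedReverse n (content (n - 2) p) i + (Pi.single k 1 : Fin n → ℤ) i := by
  have hn : 0 < n := k.pos
  have key : content n (finalSegment n p) = content n (p.map (n - ·)) + Pi.single k 1 := by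
    rw [← content_cons, finalSegment]
    split_ifs at hk ⊢ with h
    · rw [hk]
      ext
      simp [content, List.count_cons]
    · rw [hk, Nat.sub_add_cancel hn]
  rw [key, ← content_map_sub hp]
  simp [Pi.single_apply]

lemma finsum_NVec_mul_NVec (hT : (factorizations n v).Finite) {s : Set (Fin (n - 2) → ℕ)}
    {k : Fin n} (hs : ∀ u ∈ s, if Even (∑ i, u i) then (k : ℕ) = 0 else (k : ℕ) = n - 1) :
    ∑ᶠ u ∈ s, NVec (n - 2) (fun i => (u i : ℤ)) *
        NVec n ((fun i => (v i : ℤ)) - paddedReverse n u - Pi.single k 1) =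
      {pq ∈ factorizations n v | pq.1 ∈ reflectionWordsWithContent (n - 2) s}.ncard := by
  have fiber : ∀ u ∈ s, NVec (n - 2) (fun i => (u i : ℤ)) *
      NVec n ((fun i => (v i : ℤ)) - paddedReverse n u - Pi.single k 1) =
      {pq ∈ factorizations n v |
        pq.1 ∈ {p ∈ reflectionWords (n - 2) | content (n - 2) p = u}}.ncard := fun u hu => by
    rw [ncard_factorizations_fst_mem
      (fun p hp => reflectionWords_subset_alternatingWords _ hp.1), NVec_natCast]
    rintro p ⟨hp, rfl⟩ i
    rw [content_finalSegment (k := k) hp.1 (by simpa only [sum_content hp.1] using hs _ hu)]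
    simp
  rw [finsum_mem_congr rfl fiber]
  simpa only [reflectionWordsWithContent, Set.mem_ofPred_eq, and_assoc] using finsum_mem_ncard_fiber
    (hT.subset fun _ h => h.1 : {pq ∈ factorizations n v | pq.1 ∈ reflectionWords (n - 2)}.Finite)
    (fun pq => content (n - 2) pq.1) s

lemma ncard_factorizations_nil (hn : 0 < n) :
    {pq ∈ factorizations n v | pq.1 ∈ ({[]} : Set (List ℕ))}.ncard =
      NVec n ((fun i => (v i : ℤ)) - Pi.single ⟨0, hn⟩ 1) := by
  have segment_eq : finalSegment n [] = [((⟨0, hn⟩ : Fin n) : ℕ) + 1] := by simp [finalSegment]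
  rw [ncard_factorizations_fst_mem, Set.ncard_singleton, one_mul]
  · rintro _ rfl
    exact reflectionWords_subset_alternatingWords _ (nil_mem_reflectionWords _)
  · rintro _ rfl i
    rw [segment_eq, content_cons]
    simp [content, Pi.single_apply]

lemma ncard_factorizations_singleton_one (hn : 3 ≤ n) :
    {pq ∈ factorizations n v | pq.1 ∈ ({[1]} : Set (List ℕ))}.ncard =
      NVec n ((fun i => (v i : ℤ)) - Pi.single ⟨n - 1, by omega⟩ 1
        - Pi.single ⟨n - 2, by omega⟩ 1) := by
  have segment_eq : finalSegment n [1] =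
      [((⟨n - 1, by omega⟩ : Fin n) : ℕ) + 1, ((⟨n - 2, by omega⟩ : Fin n) : ℕ) + 1] := by
    rw [finalSegment, if_neg (by simp), List.map_singleton, Nat.sub_add_cancel (by omega)]
    congr 2
    dsimp only
    omega
  rw [ncard_factorizations_fst_mem, Set.ncard_singleton, one_mul]
  · rintro _ rfl
    exact (mem_alternatingWords_iff (by omega)).2 (.inl rfl)
  · rintro _ rfl i
    rw [segment_eq, content_cons, content_cons]
    simp only [content, List.count_nil, Pi.sub_apply, Pi.add_apply, Pi.single_apply]
    push_cast
    ring

lemma ncard_factorizations (hn : 3 ≤ n) (hT : (factorizations n v).Finite) :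
    (factorizations n v).ncard =
      {pq ∈ factorizations n v | pq.1 ∈ ({[1]} : Set (List ℕ))}.ncard +
      {pq ∈ factorizations n v | pq.1 ∈ ({[]} : Set (List ℕ))}.ncard +
      {pq ∈ factorizations n v |
        pq.1 ∈ reflectionWordsWithContent (n - 2) {u | Odd (∑ i, u i)}}.ncard +
      {pq ∈ factorizations n v |
        pq.1 ∈ reflectionWordsWithContent (n - 2) {u | u ≠ 0 ∧ Even (∑ i, u i)}}.ncard := by
  have one_notMem : [1] ∉ reflectionWords (n - 2) := fun h => by simpa using h.2
  have content_nil : content (n - 2) [] = 0 := rfl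
  rw [← ncard_sep_mem_union hT, ← ncard_sep_mem_union hT, ← ncard_sep_mem_union hT,
    ← alternatingWords_eq_union (by omega)]
  · exact congrArg Set.ncard (Set.sep_eq_self_iff_mem_true.2 fun _ h => h.1.1).symm
  · refine Set.disjoint_left.2 fun p => ?_
    simp only [reflectionWordsWithContent, Set.mem_union, Set.mem_singleton_iff, Set.mem_ofPred_eq]
    rintro ((rfl | rfl) | ⟨-, hodd⟩) ⟨hp, hne, heven⟩
    exacts [one_notMem hp, hne content_nil, Nat.not_even_iff_odd.2 hodd heven]
  · simp [reflectionWordsWithContent, one_notMem, content_nil]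
  · simp

end Factorizations

theorem stmt6 (n : ℕ) (hn : 3 ≤ n) (v : Fin n → ℕ)
    (h1 : 1 ≤ v ⟨0, by omega⟩) (hlast : 1 ≤ v ⟨n - 1, by omega⟩)
    (heven : Even (∑ i, v i)) :
    NVec n (fun i => (v i : ℤ)) =
      NVec n ((fun i => (v i : ℤ)) - Pi.single ⟨n - 1, by omega⟩ 1
        - Pi.single ⟨n - 2, by omega⟩ 1)
      + NVec n ((fun i => (v i : ℤ)) - Pi.single ⟨0, by omega⟩ 1)
      + ∑ᶠ u ∈ {u : Fin (n - 2) → ℕ | Odd (∑ i, u i)},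
          NVec (n - 2) (fun i => (u i : ℤ)) *
            NVec n ((fun i => (v i : ℤ))
              - (fun i : Fin n =>
                  if h : 1 ≤ n - 1 - (i : ℕ) ∧ n - 1 - (i : ℕ) ≤ n - 2 then
                    (u ⟨n - 1 - (i : ℕ) - 1, by omega⟩ : ℤ) else 0)
              - Pi.single ⟨n - 1, by omega⟩ 1)
      + ∑ᶠ u ∈ {u : Fin (n - 2) → ℕ | u ≠ 0 ∧ Even (∑ i, u i)},
          NVec (n - 2) (fun i => (u i : ℤ)) *
            NVec n ((fun i => (v i : ℤ))
              - (fun i : Fin n =>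
                  if h : 1 ≤ n - 1 - (i : ℕ) ∧ n - 1 - (i : ℕ) ≤ n - 2 then
                    (u ⟨n - 1 - (i : ℕ) - 1, by omega⟩ : ℤ) else 0)
              - Pi.single ⟨0, by omega⟩ 1) := by
  have finite := finite_factorizations (by omega) heven (.inl h1)
  have odd_sum := finsum_NVec_mul_NVec finite (s := {u | Odd (∑ i, u i)})
    (k := ⟨n - 1, by omega⟩) fun u hu => by rw [if_neg (Nat.not_even_iff_odd.2 hu)]
  have even_sum := finsum_NVec_mul_NVec finite (s := {u | u ≠ 0 ∧ Even (∑ i, u i)})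
    (k := ⟨0, by omega⟩) fun u hu => by rw [if_pos hu.2]
  rw [NVec_eq_ncard_factorizations (by omega) heven (.inl h1),
    ncard_factorizations hn finite, ncard_factorizations_singleton_one hn,
    ncard_factorizations_nil (by omega), ← odd_sum, ← even_sum]
  rfl
end

section
/- Fix an integer n ≥ 0 and an integer d with −n ≤ d ≤ n+1. Let s = n if d ≡ n (mod 2) and s = n+1 otherwise, and let k = ⌊(n+d)/2⌋. Define f : ℕ → ℕ by f(m) = N(n, (s−d)/2 + m, (s+d)/2 + m) (the diagonal sequence of the matrix M_n along j − i = d, starting from its first term). Then f is an arithmetic sequence of order k, i.e., its (k+1)-st forward difference is identically zero. -/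
/-- `N3 a b c` is the number of down-up alternating words over `{1,2,3}` that are
empty or have first letter `≥ 2`, containing exactly `a` ones, `b` twos and
`c` threes (it is `0` if some argument is negative). -/
noncomputable def N3 (a b c : ℤ) : ℕ :=
  Nat.card {w : List ℕ // (∀ x ∈ w, 1 ≤ x ∧ x ≤ 3) ∧ DownUpAlt w ∧
    (w = [] ∨ 2 ≤ w.headI) ∧
    (w.count 1 : ℤ) = a ∧ (w.count 2 : ℤ) = b ∧ (w.count 3 : ℤ) = c}

/-- Forward difference of an integer sequence. -/
def fdiff (f : ℕ → ℤ) : ℕ → ℤ := fun m => f (m + 1) - f m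

/-!
Read as a path from plate `1`, a word of even length comes to its last letter by a descent and a
word of odd length by a rise. So a nonempty even path ends in `1` or `32`, an odd path other than
`2` ends in `3` or `12`; any odd path may be continued by `1` or `12`, and any even path by `3` or
`32`. For the numbers `N` of paths with given letter counts this gives, apart from the paths `∅` and
`2`,

* `N(n, i, j) = N(n-1, i, j) + N(n, i-1, j-1)` if `n + i + j` is even,
* `N(n, i, j) = N(n, i, j-1) + N(n-1, i-1, j)` if `n + i + j` is odd.

Put `E(p, a, m) = N(p+a, p+m, a+m)` and `O(p, a, m) = N(p+a, p+m, a+1+m)`. By the first recurrence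
the difference of `E(p, a+1, ·)` is `O(p, a, · + 1)`; by the second, `O(p, a, ·)` is the sum of the
`E(q, a, ·)` with `q ≤ p`. So if all `E(p, a, ·)` have order `a`, then so do all `O(p, a, ·)`, and
all `E(p, a+1, ·)` have order `a + 1`; the induction starts from `E(p, 0, ·)`, which is constant.
-/

theorem two_mul_count_le_length_add_one_of_isChain_ne {α : Type*} [DecidableEq α] (x : α) :
    ∀ {l : List α}, l.IsChain (· ≠ ·) → 2 * l.count x ≤ l.length + 1
  | [], _ => by simp
  | [a], _ => by
    have : [a].count x ≤ 1 := List.count_le_length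
    simp only [List.length_singleton]
    omega
  | a :: b :: l, h => by
    have hab : a ≠ b := (List.isChain_cons_cons.1 h).1
    have ih := two_mul_count_le_length_add_one_of_isChain_ne x h.tail.tail
    have hcount : (a :: b :: l).count x ≤ l.count x + 1 := by
      simp only [List.count_cons, beq_iff_eq]
      split_ifs with hb ha
      · exact absurd (ha.trans hb.symm) hab
      all_goals omega
    simp only [List.tail_cons, List.length_cons] at ih ⊢
    omega

theorem ncard_image_append_union_image_append {α : Type*} {S T : Set (List α)} (hS : S.Finite)
    (hT : T.Finite) {u v : List α} (huv : u.getLast? ≠ v.getLast?) (hu : u ≠ []) (hv : v ≠ []) :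
    ((· ++ u) '' S ∪ (· ++ v) '' T).ncard = S.ncard + T.ncard := by
  have hdisjoint : Disjoint ((· ++ u) '' S) ((· ++ v) '' T) := by
    rw [Set.disjoint_left]
    rintro _ ⟨s, -, rfl⟩ ⟨t, -, h⟩
    have := congrArg List.getLast? h
    rw [List.getLast?_append_of_ne_nil _ hv, List.getLast?_append_of_ne_nil _ hu] at this
    exact huv this.symm
  rw [Set.ncard_union_eq hdisjoint (hS.image _) (hT.image _),
    Set.ncard_image_of_injective _ (List.append_left_injective _),
    Set.ncard_image_of_injective _ (List.append_left_injective _)]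

theorem downUpAlt_append_pair {w : List ℕ} {x y : ℕ} :
    DownUpAlt (w ++ [x, y]) ↔
      DownUpAlt (w ++ [x]) ∧ if Even w.length then y < x else x < y := by
  have getD_init : ∀ k ≤ w.length, (w ++ [x, y]).getD k 0 = (w ++ [x]).getD k 0 := by
    intro k hk
    rw [List.append_cons, List.getD_append]
    simpa using Nat.lt_succ_of_le hk
  have getD_x : (w ++ [x]).getD w.length 0 = x := by simp
  have getD_y : (w ++ [x, y]).getD (w.length + 1) 0 = y := by simp
  simp only [DownUpAlt, List.length_append, List.length_cons, List.length_nil, Nat.even_iff]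
  constructor
  · intro h
    refine ⟨fun k hk => ?_, ?_⟩
    · simpa only [getD_init k (by omega), getD_init (k + 1) (by omega)] using h k (by omega)
    · simpa only [getD_init _ le_rfl, getD_x, getD_y] using h w.length (by omega)
  · rintro ⟨h, hlast⟩ k hk
    obtain hk' | rfl : k < w.length ∨ k = w.length := by omega
    · simpa only [getD_init k (by omega), getD_init (k + 1) (by omega)] using h k (by omega)
    · simpa only [getD_init _ le_rfl, getD_x, getD_y] using hlast

theorem DownUpAlt.isChain_ne {w : List ℕ} (hw : DownUpAlt w) : w.IsChain (· ≠ ·) := by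
  refine List.isChain_iff_getElem.2 fun k hk => ?_
  have := hw k hk
  rw [List.getD_eq_getElem _ _ hk, List.getD_eq_getElem _ _ (Nat.lt_of_succ_lt hk)] at this
  split_ifs at this
  · exact this.ne'
  · exact this.ne

/-- A reflection path within three plates that starts at the first plate, encoded by the word of
the plates at which it is reflected: the words counted by `N3`. -/
def IsReflectionPath (w : List ℕ) : Prop :=
  (∀ x ∈ w, 1 ≤ x ∧ x ≤ 3) ∧ DownUpAlt w ∧ (w = [] ∨ 2 ≤ w.headI)

namespace IsReflectionPath

variable {w : List ℕ}

-- The default `1` for the last letter is the plate from which the path starts.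
theorem append_singleton_iff {x : ℕ} :
    IsReflectionPath (w ++ [x]) ↔ IsReflectionPath w ∧ (1 ≤ x ∧ x ≤ 3) ∧
      if Even w.length then w.getLastD 1 < x else x < w.getLastD 1 := by
  obtain rfl | ⟨u, y, rfl⟩ := w.eq_nil_or_concat'
  · have halt : DownUpAlt [x] ∧ DownUpAlt [] := by simp [DownUpAlt]
    simp only [IsReflectionPath, halt, List.nil_append, List.mem_singleton, forall_eq,
      List.cons_ne_nil, List.headI_cons, List.not_mem_nil, List.length_nil, Even.zero,
      List.getLastD_nil, if_true, IsEmpty.forall_iff, implies_true, true_and, false_or, true_or]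
    omega
  · have hhead : (u ++ [y, x]).headI = (u ++ [y]).headI := by cases u <;> rfl
    simp only [IsReflectionPath, List.append_assoc, List.singleton_append, downUpAlt_append_pair,
      hhead, List.mem_append, List.mem_cons, List.not_mem_nil, or_imp, forall_and, forall_eq,
      List.append_eq_nil_iff, List.cons_ne_nil, List.getLastD_concat, List.length_append,
      List.length_singleton, Nat.even_add_one, ite_not]
    tauto

theorem getLastD_bounds (hw : IsReflectionPath w) :
    if Even w.length then 1 ≤ w.getLastD 1 ∧ w.getLastD 1 ≤ 2
      else 2 ≤ w.getLastD 1 ∧ w.getLastD 1 ≤ 3 := by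
  induction w using List.reverseRecOn with
  | nil => simp
  | append_singleton u x ih =>
    obtain ⟨hu, hx, hlast⟩ := append_singleton_iff.1 hw
    specialize ih hu
    simp only [List.getLastD_concat, List.length_append, List.length_singleton, Nat.even_add_one]
    split_ifs at * <;> omega

theorem append_one_iff (hodd : Odd w.length) :
    IsReflectionPath (w ++ [1]) ↔ IsReflectionPath w := by
  rw [append_singleton_iff, if_neg (Nat.not_even_iff_odd.2 hodd)]
  refine ⟨And.left, fun hw => ⟨hw, by simp, ?_⟩⟩
  have := hw.getLastD_bounds
  rw [if_neg (Nat.not_even_iff_odd.2 hodd)] at this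
  omega

theorem append_three_iff (heven : Even w.length) :
    IsReflectionPath (w ++ [3]) ↔ IsReflectionPath w := by
  rw [append_singleton_iff, if_pos heven]
  refine ⟨And.left, fun hw => ⟨hw, by simp, ?_⟩⟩
  have := hw.getLastD_bounds
  rw [if_pos heven] at this
  omega

theorem append_one_two_iff (hodd : Odd w.length) :
    IsReflectionPath (w ++ [1, 2]) ↔ IsReflectionPath w := by
  rw [List.append_cons, append_singleton_iff, append_one_iff hodd]
  simp [hodd]

theorem append_three_two_iff (heven : Even w.length) :
    IsReflectionPath (w ++ [3, 2]) ↔ IsReflectionPath w := by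
  rw [List.append_cons, append_singleton_iff, append_three_iff heven]
  simp [heven]

theorem exists_eq_append_of_even (hw : IsReflectionPath w) (heven : Even w.length)
    (hne : w ≠ []) : ∃ u, w = u ++ [1] ∨ w = u ++ [3, 2] := by
  obtain ⟨v, x, rfl⟩ := w.eq_nil_or_concat'.resolve_left hne
  obtain ⟨hv, hx, hlast⟩ := append_singleton_iff.1 hw
  have hodd : ¬ Even v.length := by simpa [Nat.even_add_one] using heven
  have hbounds := hv.getLastD_bounds
  rw [if_neg hodd] at hlast hbounds
  obtain rfl | rfl : x = 1 ∨ x = 2 := by omega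
  · exact ⟨v, Or.inl rfl⟩
  · obtain rfl | ⟨u, y, rfl⟩ := v.eq_nil_or_concat'
    · simp at hodd
    · rw [List.getLastD_concat] at hlast hbounds
      obtain rfl : y = 3 := by omega
      exact ⟨u, Or.inr (by simp)⟩

theorem exists_eq_append_of_odd (hw : IsReflectionPath w) (hodd : Odd w.length)
    (hne : w ≠ [2]) : ∃ u, w = u ++ [3] ∨ w = u ++ [1, 2] := by
  obtain rfl | ⟨v, x, rfl⟩ := w.eq_nil_or_concat'
  · simp at hodd
  obtain ⟨hv, hx, hlast⟩ := append_singleton_iff.1 hw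
  have heven : Even v.length := by simpa [Nat.odd_add_one] using hodd
  have hbounds := hv.getLastD_bounds
  rw [if_pos heven] at hlast hbounds
  obtain rfl | rfl : x = 3 ∨ x = 2 := by omega
  · exact ⟨v, Or.inl rfl⟩
  · obtain rfl | ⟨u, y, rfl⟩ := v.eq_nil_or_concat'
    · simp at hne
    · rw [List.getLastD_concat] at hlast hbounds
      obtain rfl : y = 1 := by omega
      exact ⟨u, Or.inr (by simp)⟩

theorem two_mul_count_le (hw : IsReflectionPath w) (x : ℕ) : 2 * w.count x ≤ w.length + 1 :=
  two_mul_count_le_length_add_one_of_isChain_ne x hw.2.1.isChain_ne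

theorem length_eq_count (hw : IsReflectionPath w) :
    w.length = w.count 1 + w.count 2 + w.count 3 := by
  have hletters := hw.1
  clear hw
  induction w with
  | nil => rfl
  | cons x w ih =>
    have hx := hletters x List.mem_cons_self
    have ih := ih fun y hy => hletters y (List.mem_cons_of_mem x hy)
    obtain rfl | rfl | rfl : x = 1 ∨ x = 2 ∨ x = 3 := by omega
    all_goals
      simp only [List.length_cons, List.count_cons, Nat.reduceBEq, Bool.false_eq_true, if_true,
        if_false, beq_self_eq_true]
      omega

end IsReflectionPath

/-- The reflection paths with `n` ones, `i` twos and `j` threes, so that `N3 n i j` is their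
number. -/
def reflectionPaths (n i j : ℤ) : Set (List ℕ) :=
  {w | IsReflectionPath w ∧ (w.count 1 : ℤ) = n ∧ (w.count 2 : ℤ) = i ∧ (w.count 3 : ℤ) = j}

theorem N3_eq_ncard (n i j : ℤ) : N3 n i j = (reflectionPaths n i j).ncard := by
  rw [← Nat.card_coe_set_eq]
  simp only [N3, reflectionPaths, IsReflectionPath, and_assoc, Set.coe_ofPred]

theorem length_of_mem_reflectionPaths {n i j : ℤ} {w : List ℕ} (hw : w ∈ reflectionPaths n i j) :
    (w.length : ℤ) = n + i + j := by
  obtain ⟨hpath, rfl, rfl, rfl⟩ := hw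
  exact_mod_cast hpath.length_eq_count

theorem finite_reflectionPaths (n i j : ℤ) : (reflectionPaths n i j).Finite := by
  refine ((List.finite_length_eq (Fin 4) (n + i + j).toNat).image (List.map Fin.val)).subset ?_
  intro w hw
  have hlength := length_of_mem_reflectionPaths hw
  have hletters : ∀ x ∈ w, x < 4 := fun x hx => Nat.lt_succ_of_le (hw.1.1 x hx).2
  lift w to List (Fin 4) using hletters
  rw [List.length_map] at hlength
  exact ⟨w, by simp [← hlength], rfl⟩

theorem even_length_iff_of_mem_reflectionPaths {n i j : ℤ} {w : List ℕ}
    (hw : w ∈ reflectionPaths n i j) : Even w.length ↔ Even (n + i + j) := by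
  rw [← length_of_mem_reflectionPaths hw, Int.even_coe_nat]

theorem append_mem_reflectionPaths_iff {n i j : ℤ} {u v : List ℕ}
    (huv : IsReflectionPath (u ++ v) ↔ IsReflectionPath u) :
    u ++ v ∈ reflectionPaths n i j ↔
      u ∈ reflectionPaths (n - v.count 1) (i - v.count 2) (j - v.count 3) := by
  simp only [reflectionPaths, Set.mem_ofPred_eq, huv, List.count_append, Nat.cast_add,
    eq_sub_iff_add_eq]

theorem reflectionPaths_of_even {n i j : ℤ} (heven : Even (n + i + j)) (hne : (n, i, j) ≠ 0) :
    reflectionPaths n i j =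
      (· ++ [1]) '' reflectionPaths (n - 1) i j ∪
        (· ++ [3, 2]) '' reflectionPaths n (i - 1) (j - 1) := by
  have mem_one {u : List ℕ} (hu : Odd u.length) :
      u ++ [1] ∈ reflectionPaths n i j ↔ u ∈ reflectionPaths (n - 1) i j := by
    simpa using append_mem_reflectionPaths_iff (IsReflectionPath.append_one_iff hu)
  have mem_three_two {u : List ℕ} (hu : Even u.length) :
      u ++ [3, 2] ∈ reflectionPaths n i j ↔ u ∈ reflectionPaths n (i - 1) (j - 1) := by
    simpa using append_mem_reflectionPaths_iff (IsReflectionPath.append_three_two_iff hu)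
  ext w
  constructor
  · intro hw
    have hlength := (even_length_iff_of_mem_reflectionPaths hw).2 heven
    have hnil : w ≠ [] := by
      rintro rfl
      obtain ⟨-, rfl, rfl, rfl⟩ := hw
      exact hne rfl
    obtain ⟨u, rfl | rfl⟩ := hw.1.exists_eq_append_of_even hlength hnil
    · exact Or.inl ⟨u, (mem_one (by simpa [Nat.even_add_one] using hlength)).1 hw, rfl⟩
    · exact Or.inr ⟨u, (mem_three_two (by simpa [Nat.even_add] using hlength)).1 hw, rfl⟩
  · rintro (⟨u, hu, rfl⟩ | ⟨u, hu, rfl⟩)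
    all_goals have hlength := even_length_iff_of_mem_reflectionPaths hu
    · exact (mem_one (by grind)).2 hu
    · exact (mem_three_two (by grind)).2 hu

theorem reflectionPaths_of_odd {n i j : ℤ} (hodd : Odd (n + i + j)) (hne : (n, i, j) ≠ (0, 1, 0)) :
    reflectionPaths n i j =
      (· ++ [3]) '' reflectionPaths n i (j - 1) ∪
        (· ++ [1, 2]) '' reflectionPaths (n - 1) (i - 1) j := by
  have mem_three {u : List ℕ} (hu : Even u.length) :
      u ++ [3] ∈ reflectionPaths n i j ↔ u ∈ reflectionPaths n i (j - 1) := by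
    simpa using append_mem_reflectionPaths_iff (IsReflectionPath.append_three_iff hu)
  have mem_one_two {u : List ℕ} (hu : Odd u.length) :
      u ++ [1, 2] ∈ reflectionPaths n i j ↔ u ∈ reflectionPaths (n - 1) (i - 1) j := by
    simpa using append_mem_reflectionPaths_iff (IsReflectionPath.append_one_two_iff hu)
  ext w
  constructor
  · intro hw
    have hlength : Odd w.length := by
      rwa [← Nat.not_even_iff_odd, even_length_iff_of_mem_reflectionPaths hw, Int.not_even_iff_odd]
    have htwo : w ≠ [2] := by
      rintro rfl
      obtain ⟨-, rfl, rfl, rfl⟩ := hw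
      exact hne rfl
    obtain ⟨u, rfl | rfl⟩ := hw.1.exists_eq_append_of_odd hlength htwo
    · exact Or.inl ⟨u, (mem_three (by simpa [Nat.odd_add_one] using hlength)).1 hw, rfl⟩
    · exact Or.inr ⟨u, (mem_one_two (by simpa [Nat.odd_add] using hlength)).1 hw, rfl⟩
  · rintro (⟨u, hu, rfl⟩ | ⟨u, hu, rfl⟩)
    all_goals have hlength := even_length_iff_of_mem_reflectionPaths hu
    · exact (mem_three (by grind)).2 hu
    · exact (mem_one_two (by grind)).2 hu

theorem N3_of_even {n i j : ℤ} (heven : Even (n + i + j)) (hne : (n, i, j) ≠ 0) :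
    N3 n i j = N3 (n - 1) i j + N3 n (i - 1) (j - 1) := by
  simp only [N3_eq_ncard]
  rw [reflectionPaths_of_even heven hne, ncard_image_append_union_image_append
    (finite_reflectionPaths ..) (finite_reflectionPaths ..) (by simp) (by simp) (by simp)]

theorem N3_of_odd {n i j : ℤ} (hodd : Odd (n + i + j)) (hne : (n, i, j) ≠ (0, 1, 0)) :
    N3 n i j = N3 n i (j - 1) + N3 (n - 1) (i - 1) j := by
  simp only [N3_eq_ncard]
  rw [reflectionPaths_of_odd hodd hne, ncard_image_append_union_image_append
    (finite_reflectionPaths ..) (finite_reflectionPaths ..) (by simp) (by simp) (by simp)]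

theorem reflectionPaths_nonempty_of_N3_ne_zero {n i j : ℤ} (h : N3 n i j ≠ 0) :
    (reflectionPaths n i j).Nonempty :=
  Set.nonempty_of_ncard_ne_zero (N3_eq_ncard n i j ▸ h)

theorem N3_eq_zero_of_ones_neg {n i j : ℤ} (hn : n < 0) : N3 n i j = 0 := by
  by_contra h
  obtain ⟨w, -, hones, -⟩ := reflectionPaths_nonempty_of_N3_ne_zero h
  omega

theorem N3_eq_zero_of_lt_twos {n i j : ℤ} (hi : n + j + 1 < i) : N3 n i j = 0 := by
  by_contra h
  obtain ⟨w, hw⟩ := reflectionPaths_nonempty_of_N3_ne_zero h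
  have hlength := length_of_mem_reflectionPaths hw
  obtain ⟨hpath, -, htwos, -⟩ := hw
  have := hpath.two_mul_count_le 2
  omega

theorem N3_eq_zero_of_lt_threes {n i j : ℤ} (hj : n + i + 1 < j) : N3 n i j = 0 := by
  by_contra h
  obtain ⟨w, hw⟩ := reflectionPaths_nonempty_of_N3_ne_zero h
  have hlength := length_of_mem_reflectionPaths hw
  obtain ⟨hpath, -, -, hthrees⟩ := hw
  have := hpath.two_mul_count_le 3
  omega

-- If the twos outnumber all other letters by one, they take every odd position, so that only ones
-- can stand between them.
theorem N3_eq_zero_of_twos_eq_of_threes_pos {n i j : ℤ} (hi : i = n + j + 1)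
    (hj : 0 < j) : N3 n i j = 0 := by
  obtain hn | hn := lt_or_ge n 0
  · exact N3_eq_zero_of_ones_neg hn
  · lift n to ℕ using hn
    induction n generalizing i with
    | zero =>
      rw [N3_of_odd ⟨j, by omega⟩ (by simp; omega), N3_eq_zero_of_lt_twos (by omega),
        N3_eq_zero_of_ones_neg (by simp)]
    | succ n ih =>
      rw [N3_of_odd ⟨n + 1 + j, by omega⟩ (by simp; omega), N3_eq_zero_of_lt_twos (by omega),
        zero_add, Nat.cast_succ, add_sub_cancel_right]
      exact ih (by omega)

/-- The numbers of reflection paths with `p + a` ones and, for `m = 0, 1, …`, with `p + m` twos and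
`a + m` threes: a diagonal of even path lengths. Its order as an arithmetic sequence is `a`. -/
noncomputable def evenDiagonal (p a : ℕ) : ℕ → ℤ := fun m => N3 (p + a) (p + m) (a + m)

/-- The numbers of reflection paths with `p + a` ones and, for `m = 0, 1, …`, with `p + m` twos and
`a + 1 + m` threes: a diagonal of odd path lengths, indexed like `evenDiagonal`. -/
noncomputable def oddDiagonal (p a : ℕ) : ℕ → ℤ := fun m => N3 (p + a) (p + m) (a + 1 + m)

theorem fdiff_evenDiagonal (p a m : ℕ) :
    fdiff (evenDiagonal p a) m = N3 (p + a - 1) (p + (m + 1)) (a + (m + 1)) := by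
  have hrec : N3 (p + a) (p + (m + 1)) (a + (m + 1)) =
      N3 (p + a - 1) (p + (m + 1)) (a + (m + 1)) + N3 (p + a) (p + m) (a + m) := by
    rw [N3_of_even ⟨p + a + m + 1, by ring⟩ (by simp; omega)]
    simp only [← add_assoc, add_sub_cancel_right]
  simp only [fdiff, evenDiagonal, Nat.cast_succ, hrec, Nat.cast_add, add_sub_cancel_right]

theorem fdiff_evenDiagonal_zero (p : ℕ) : fdiff (evenDiagonal p 0) = 0 := by
  ext m
  rw [fdiff_evenDiagonal, N3_eq_zero_of_twos_eq_of_threes_pos (by push_cast; ring) (by positivity)]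
  rfl

theorem fdiff_evenDiagonal_succ (p a : ℕ) :
    fdiff (evenDiagonal p (a + 1)) = fun m => oddDiagonal p a (m + 1) := by
  ext m
  rw [fdiff_evenDiagonal, oddDiagonal]
  push_cast
  rw [← add_assoc (p : ℤ) a 1, add_sub_cancel_right]

theorem oddDiagonal_zero (a : ℕ) : oddDiagonal 0 a = evenDiagonal 0 a := by
  ext m
  have hrec : N3 (0 + a) (0 + m) (a + 1 + m) = N3 (0 + a) (0 + m) (a + m) := by
    rw [N3_of_odd ⟨a + m, by ring⟩ (by simp; omega),
      N3_eq_zero_of_lt_threes (n := _ - 1) (by omega), add_zero, add_right_comm,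
      add_sub_cancel_right]
  simp only [oddDiagonal, evenDiagonal, Nat.cast_zero, hrec]

theorem oddDiagonal_succ (p a : ℕ) :
    oddDiagonal (p + 1) a = evenDiagonal (p + 1) a + oddDiagonal p a := by
  ext m
  have hrec : N3 (p + 1 + a) (p + 1 + m) (a + 1 + m) =
      N3 (p + 1 + a) (p + 1 + m) (a + m) + N3 (p + a) (p + m) (a + 1 + m) := by
    rw [N3_of_odd ⟨p + 1 + a + m, by ring⟩ (by simp; omega)]
    simp only [add_right_comm _ (1 : ℤ), add_sub_cancel_right]
  simp only [oddDiagonal, evenDiagonal, Pi.add_apply, Nat.cast_succ, hrec, Nat.cast_add]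

theorem fdiff_eq_fwdDiff : fdiff = fwdDiff 1 := rfl

theorem iterate_fdiff_oddDiagonal_of_evenDiagonal {k a : ℕ}
    (h : ∀ p, fdiff^[k] (evenDiagonal p a) = 0) (p : ℕ) : fdiff^[k] (oddDiagonal p a) = 0 := by
  induction p with
  | zero => rw [oddDiagonal_zero, h]
  | succ p ih =>
    have hadd := fwdDiff_iter_add 1 (evenDiagonal (p + 1) a) (oddDiagonal p a) k
    rw [← fdiff_eq_fwdDiff] at hadd
    rw [oddDiagonal_succ, hadd, h, ih, add_zero]

theorem iterate_fdiff_evenDiagonal (p a : ℕ) : fdiff^[a + 1] (evenDiagonal p a) = 0 := by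
  induction a generalizing p with
  | zero => exact fdiff_evenDiagonal_zero p
  | succ a ih =>
    ext m
    rw [Function.iterate_succ_apply, fdiff_evenDiagonal_succ, fdiff_eq_fwdDiff,
      fwdDiff_iter_comp_add, ← fdiff_eq_fwdDiff, iterate_fdiff_oddDiagonal_of_evenDiagonal ih]
    rfl

theorem iterate_fdiff_oddDiagonal (p a : ℕ) : fdiff^[a + 1] (oddDiagonal p a) = 0 :=
  iterate_fdiff_oddDiagonal_of_evenDiagonal (iterate_fdiff_evenDiagonal · a) p

theorem stmt11 (n : ℕ) (d : ℤ) (hd1 : -(n : ℤ) ≤ d) (hd2 : d ≤ (n : ℤ) + 1) :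
    let s : ℤ := if (2 : ℤ) ∣ (d - n) then (n : ℤ) else (n : ℤ) + 1
    let k : ℕ := (((n : ℤ) + d) / 2).toNat
    fdiff^[k + 1]
      (fun m : ℕ => (N3 (n : ℤ) ((s - d) / 2 + m) ((s + d) / 2 + m) : ℤ)) = 0 := by
  intro s k
  obtain ⟨p, hp⟩ : ∃ p : ℕ, (n : ℤ) = p + k := ⟨n - k, by omega⟩
  by_cases hpar : (2 : ℤ) ∣ d - n
  · have hs : s = n := if_pos hpar
    have htwos : (s - d) / 2 = p := by omega
    have hthrees : (s + d) / 2 = k := by omega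
    rw [hp, htwos, hthrees]
    exact iterate_fdiff_evenDiagonal p k
  · have hs : s = n + 1 := if_neg hpar
    have htwos : (s - d) / 2 = p := by omega
    have hthrees : (s + d) / 2 = k + 1 := by omega
    rw [hp, htwos, hthrees]
    exact iterate_fdiff_oddDiagonal p k
end

section
/- For all nonnegative integers n, i, j with i + j < n, one has N(n, i, j) = 0. (The first nonzero anti-diagonal of the matrix M_n is the one with i + j = n.) -/
/-! Each `1` of an alternating word that does not start with `1` is immediately preceded by a
different letter, and distinct `1`s have distinct predecessors. Hence at most half of the letters
are `1`s. -/

theorem two_mul_countP_le_length_of_isChain {α : Type*} {p : α → Bool} {l : List α}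
    (hchain : l.IsChain fun a b => p a → ¬p b) (hhead : ∀ a ∈ l.head?, ¬p a) :
    2 * l.countP p ≤ l.length := by
  induction l using List.twoStepInduction with
  | nil => simp
  | singleton a =>
    have ha : ¬p a := hhead a rfl
    simp [ha]
  | cons_cons a b l ih_l ih_bl =>
    have ha : ¬p a := hhead a rfl
    have hbl := hchain.of_cons
    obtain ⟨hb_head, hl⟩ := List.isChain_cons.mp hbl
    by_cases hb : p b
    · have hcount_l := ih_l hl fun c hc => hb_head c hc hb
      simp only [List.countP_cons_of_neg ha, List.countP_cons_of_pos hb, List.length_cons]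
      lia
    · have hcount_bl := ih_bl b hbl (by simpa using hb)
      simp only [List.countP_cons_of_neg ha, List.length_cons] at hcount_bl ⊢
      lia

namespace DownUpAlt

variable {w : List ℕ}

theorem isChain_ne_s14 (hw : DownUpAlt w) : w.IsChain (· ≠ ·) := by
  refine List.isChain_iff_getElem.mpr fun k hk => ?_
  have hlt := hw k hk
  rw [List.getD_eq_getElem _ _ hk, List.getD_eq_getElem _ _ (Nat.lt_of_succ_lt hk)] at hlt
  split_ifs at hlt
  exacts [hlt.ne', hlt.ne]

theorem two_mul_count_le_length_of_notMem_head? (hw : DownUpAlt w) {a : ℕ} (ha : a ∉ w.head?) :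
    2 * w.count a ≤ w.length := by
  refine two_mul_countP_le_length_of_isChain (hw.isChain_ne_s14.imp fun x y hxy => ?_) fun x hx => ?_
  · simp only [beq_iff_eq]
    rintro rfl
    exact hxy.symm
  · simp only [beq_iff_eq]
    rintro rfl
    exact ha hx

end DownUpAlt

theorem stmt14 (n i j : ℕ) (h : i + j < n) :
    N3 (n : ℤ) (i : ℤ) (j : ℤ) = 0 := by
  refine Nat.card_eq_zero.mpr (.inl ⟨?_⟩)
  rintro ⟨w, hletters, halt, hhead, hones, htwos, hthrees⟩
  have hone_notMem : 1 ∉ w.head? := by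
    cases w with
    | nil => simp
    | cons a w =>
      have ha : 2 ≤ a := by simpa using hhead
      simp only [List.head?_cons, Option.mem_some_iff]
      lia
  have hhalf : 2 * w.count 1 ≤ w.length :=
    halt.two_mul_count_le_length_of_notMem_head? hone_notMem
  have hlength : w.count 1 + w.count 2 + w.count 3 = w.length := by
    simpa [Finset.sum_Icc_succ_top] using
      Multiset.sum_count_eq_card (s := Finset.Icc 1 3) (m := (w : Multiset ℕ))
        fun x hx => Finset.mem_Icc.mpr (hletters x hx)
  lia
end
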